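/- Let (m, α, μ) and (n, β, ν) be classical systems with coordinates k = (k_1,…,k_d), each k_i ∈ ℝ^m, and l = (l_1,…,l_d), each l_i ∈ ℝ^n. Then the set of transport plans from (m, α, μ) to (n, β, ν) is nonempty (it contains the product coupling ω_{pr} = μ_p ν_r), and the infimum defining the Wasserstein distance is attained: there exists a transport plan ω* from (m, α, μ) to (n, β, ν) such that I(ω*) ≤ I(ω) for every transport plan ω from (m, α, μ) to (n, β, ν), so that W((m,α,μ),(n,β,ν)) = I(ω*)^{1/2}. -/

import Mathlib

/-- A classical system: a row-stochastic matrix α with strictly positive invariant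
probability vector μ. -/
def IsClassicalSystem {m : ℕ} (α : Fin m → Fin m → ℝ) (μ : Fin m → ℝ) : Prop :=
  (∀ p q, 0 ≤ α p q) ∧ (∀ p, ∑ q, α p q = 1) ∧
  (∀ p, 0 < μ p) ∧ (∑ p, μ p = 1) ∧ (∀ q, ∑ p, μ p * α p q = μ q)

/-- A coupling of the probability vectors μ and ν. -/
def IsCoupling {m n : ℕ} (μ : Fin m → ℝ) (ν : Fin n → ℝ) (ω : Fin m → Fin n → ℝ) : Prop :=
  (∀ p r, 0 ≤ ω p r) ∧ (∀ p, ∑ r, ω p r = μ p) ∧ (∀ r, ∑ p, ω p r = ν r)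

/-- A transport plan from the system (m, α, μ) to the system (n, β, ν): a coupling ω
satisfying Σ_p ω_{pr} α_{pq} = Σ_s ω_{qs} (ν_r/ν_s) β_{rs} for all q, r. -/
def IsTransportPlan {m n : ℕ} (α : Fin m → Fin m → ℝ) (μ : Fin m → ℝ)
    (β : Fin n → Fin n → ℝ) (ν : Fin n → ℝ) (ω : Fin m → Fin n → ℝ) : Prop :=
  IsCoupling μ ν ω ∧
    ∀ (q : Fin m) (r : Fin n), ∑ p, ω p r * α p q = ∑ s, ω q s * (ν r / ν s * β r s)

/-- The quadratic transport cost of a coupling ω relative to the coordinates k and l. -/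
def transportCost {d m n : ℕ} (k : Fin d → Fin m → ℝ) (l : Fin d → Fin n → ℝ)
    (ω : Fin m → Fin n → ℝ) : ℝ :=
  ∑ i, ∑ p, ∑ r, ω p r * (k i p - l i r) ^ 2

/-- The Wasserstein distance from (m, α, μ) with coordinates k to (n, β, ν) with
coordinates l. -/
noncomputable def Wdist {d m n : ℕ} (α : Fin m → Fin m → ℝ) (μ : Fin m → ℝ)
    (β : Fin n → Fin n → ℝ) (ν : Fin n → ℝ)
    (k : Fin d → Fin m → ℝ) (l : Fin d → Fin n → ℝ) : ℝ :=
  sInf {x | ∃ ω, IsTransportPlan α μ β ν ω ∧ x = Real.sqrt (transportCost k l ω)}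

/-!
The transport plans form a compact polytope: they are cut out by linear equations and inequalities,
and each entry `ω p r` lies between `0` and `μ p`. The cost is linear in `ω`, so it attains its
minimum as soon as one plan exists, and the product coupling `μ p * ν r` is one: both sides of its
intertwining equation equal `μ q * ν r`, the left by invariance of `μ` and the right because the
rows of `β` sum to one.
-/

section Product

variable {m n : ℕ} {α : Fin m → Fin m → ℝ} {μ : Fin m → ℝ} {β : Fin n → Fin n → ℝ} {ν : Fin n → ℝ}

theorem isCoupling_mul (hμ_nonneg : ∀ p, 0 ≤ μ p) (hμ_sum : ∑ p, μ p = 1)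
    (hν_nonneg : ∀ r, 0 ≤ ν r) (hν_sum : ∑ r, ν r = 1) :
    IsCoupling μ ν fun p r ↦ μ p * ν r :=
  ⟨fun p r ↦ mul_nonneg (hμ_nonneg p) (hν_nonneg r),
    fun p ↦ by rw [← Finset.mul_sum, hν_sum, mul_one],
    fun r ↦ by rw [← Finset.sum_mul, hμ_sum, one_mul]⟩

theorem isTransportPlan_mul (hμ_nonneg : ∀ p, 0 ≤ μ p) (hμ_sum : ∑ p, μ p = 1)
    (hμα : ∀ q, ∑ p, μ p * α p q = μ q) (hν_pos : ∀ r, 0 < ν r) (hν_sum : ∑ r, ν r = 1)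
    (hβ_sum : ∀ r, ∑ s, β r s = 1) :
    IsTransportPlan α μ β ν fun p r ↦ μ p * ν r := by
  refine ⟨isCoupling_mul hμ_nonneg hμ_sum (fun r ↦ (hν_pos r).le) hν_sum, fun q r ↦ ?_⟩
  calc ∑ p, μ p * ν r * α p q
    _ = (∑ p, μ p * α p q) * ν r := by
      simp only [Finset.sum_mul, mul_right_comm]
    _ = μ q * ν r * ∑ s, β r s := by rw [hμα, hβ_sum, mul_one]
    _ = ∑ s, μ q * ν s * (ν r / ν s * β r s) := by
      rw [Finset.mul_sum]
      refine Finset.sum_congr rfl fun s _ ↦ ?_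
      have hν_ne : ν s ≠ 0 := (hν_pos s).ne'
      field_simp

end Product

section Compactness

variable {m n : ℕ}

theorem IsCoupling.apply_le_left {μ : Fin m → ℝ} {ν : Fin n → ℝ} {ω : Fin m → Fin n → ℝ}
    (hω : IsCoupling μ ν ω) (p : Fin m) (r : Fin n) : ω p r ≤ μ p := by
  obtain ⟨h_nonneg, h_row, -⟩ := hω
  rw [← h_row p]
  exact Finset.single_le_sum (fun s _ ↦ h_nonneg p s) (Finset.mem_univ r)

theorem isClosed_setOfPred_isCoupling (μ : Fin m → ℝ) (ν : Fin n → ℝ) :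
    IsClosed {ω | IsCoupling μ ν ω} := by
  have h_nonneg : IsClosed {ω : Fin m → Fin n → ℝ | ∀ p r, 0 ≤ ω p r} := by
    simp only [Set.ofPred_forall]
    exact isClosed_iInter fun p ↦ isClosed_iInter fun r ↦ isClosed_le (by fun_prop) (by fun_prop)
  have h_row : IsClosed {ω : Fin m → Fin n → ℝ | ∀ p, ∑ r, ω p r = μ p} := by
    simp only [Set.ofPred_forall]
    exact isClosed_iInter fun p ↦ isClosed_eq (by fun_prop) (by fun_prop)
  have h_col : IsClosed {ω : Fin m → Fin n → ℝ | ∀ r, ∑ p, ω p r = ν r} := by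
    simp only [Set.ofPred_forall]
    exact isClosed_iInter fun r ↦ isClosed_eq (by fun_prop) (by fun_prop)
  exact h_nonneg.inter (h_row.inter h_col)

theorem isCompact_setOfPred_isCoupling (μ : Fin m → ℝ) (ν : Fin n → ℝ) :
    IsCompact {ω | IsCoupling μ ν ω} :=
  (isCompact_Icc (a := 0) (b := fun p _ ↦ μ p)).of_isClosed_subset
    (isClosed_setOfPred_isCoupling μ ν) fun _ hω ↦ ⟨hω.1, hω.apply_le_left⟩

theorem isCompact_setOfPred_isTransportPlan (α : Fin m → Fin m → ℝ) (μ : Fin m → ℝ)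
    (β : Fin n → Fin n → ℝ) (ν : Fin n → ℝ) :
    IsCompact {ω | IsTransportPlan α μ β ν ω} := by
  have h_intertwine : IsClosed {ω : Fin m → Fin n → ℝ |
      ∀ q r, ∑ p, ω p r * α p q = ∑ s, ω q s * (ν r / ν s * β r s)} := by
    simp only [Set.ofPred_forall]
    exact isClosed_iInter fun q ↦ isClosed_iInter fun r ↦ isClosed_eq (by fun_prop) (by fun_prop)
  exact (isCompact_setOfPred_isCoupling μ ν).inter_right h_intertwine

end Compactness

section Optimality

variable {d m n : ℕ} {α : Fin m → Fin m → ℝ} {μ : Fin m → ℝ} {β : Fin n → Fin n → ℝ} {ν : Fin n → ℝ}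

theorem continuous_transportCost (k : Fin d → Fin m → ℝ) (l : Fin d → Fin n → ℝ) :
    Continuous (transportCost k l) := by
  unfold transportCost
  fun_prop

theorem exists_isMinOn_transportCost (h_plan : ∃ ω, IsTransportPlan α μ β ν ω)
    (k : Fin d → Fin m → ℝ) (l : Fin d → Fin n → ℝ) :
    ∃ ω, IsTransportPlan α μ β ν ω ∧
      IsMinOn (transportCost k l) {ω | IsTransportPlan α μ β ν ω} ω :=
  (isCompact_setOfPred_isTransportPlan α μ β ν).exists_isMinOn h_plan
    (continuous_transportCost k l).continuousOn

theorem wdist_eq_sqrt_of_isMinOn {k : Fin d → Fin m → ℝ} {l : Fin d → Fin n → ℝ}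
    {ω : Fin m → Fin n → ℝ} (hω : IsTransportPlan α μ β ν ω)
    (h_min : IsMinOn (transportCost k l) {ω | IsTransportPlan α μ β ν ω} ω) :
    Wdist α μ β ν k l = √(transportCost k l ω) := by
  refine IsLeast.csInf_eq ⟨⟨ω, hω, rfl⟩, ?_⟩
  rintro _ ⟨ω', hω', rfl⟩
  exact Real.sqrt_le_sqrt (h_min hω')

theorem stmt_10_general (hμ_nonneg : ∀ p, 0 ≤ μ p) (hμ_sum : ∑ p, μ p = 1)
    (hμα : ∀ q, ∑ p, μ p * α p q = μ q) (hν_pos : ∀ r, 0 < ν r) (hν_sum : ∑ r, ν r = 1)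
    (hβ_sum : ∀ r, ∑ s, β r s = 1) (k : Fin d → Fin m → ℝ) (l : Fin d → Fin n → ℝ) :
    IsTransportPlan α μ β ν (fun p r ↦ μ p * ν r) ∧
    ∃ ωstar, IsTransportPlan α μ β ν ωstar ∧
      (∀ ω, IsTransportPlan α μ β ν ω → transportCost k l ωstar ≤ transportCost k l ω) ∧
      Wdist α μ β ν k l = √(transportCost k l ωstar) := by
  have h_mul := isTransportPlan_mul hμ_nonneg hμ_sum hμα hν_pos hν_sum hβ_sum
  obtain ⟨ωstar, h_plan, h_min⟩ := exists_isMinOn_transportCost ⟨_, h_mul⟩ k l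
  exact ⟨h_mul, ωstar, h_plan, fun ω hω ↦ h_min hω, wdist_eq_sqrt_of_isMinOn h_plan h_min⟩

end Optimality

/-- The set of transport plans between two classical systems is nonempty
(it contains the product coupling), and the infimum defining the Wasserstein distance is
attained by an optimal transport plan. -/
theorem stmt_10 {d m n : ℕ} (α : Fin m → Fin m → ℝ) (μ : Fin m → ℝ)
    (β : Fin n → Fin n → ℝ) (ν : Fin n → ℝ)
    (hA : IsClassicalSystem α μ) (hB : IsClassicalSystem β ν)
    (k : Fin d → Fin m → ℝ) (l : Fin d → Fin n → ℝ) :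
    IsTransportPlan α μ β ν (fun p r => μ p * ν r) ∧
    ∃ ωstar, IsTransportPlan α μ β ν ωstar ∧
      (∀ ω, IsTransportPlan α μ β ν ω → transportCost k l ωstar ≤ transportCost k l ω) ∧
      Wdist α μ β ν k l = Real.sqrt (transportCost k l ωstar) := by
  obtain ⟨-, -, hμ_pos, hμ_sum, hμα⟩ := hA
  obtain ⟨-, hβ_sum, hν_pos, hν_sum, -⟩ := hB
  exact stmt_10_general (fun p ↦ (hμ_pos p).le) hμ_sum hμα hν_pos hν_sum hβ_sum k l
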